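/- If M(n) denotes the number of legal codewords in the (1,3,n)-LRM scheme (equivalently, the number of realizable cyclic base-words of length n), then M(n)/3^n → 1 as n → ∞. -/

import Mathlib

/-- The symbol in `{0,...,5}` recording the relative order of three distinct charges
`(a, b, c)`: `0 = [1,2,3]` (a>b>c), `1 = [1,3,2]` (a>c>b), `2 = [2,1,3]` (b>a>c),
`3 = [3,1,2]` (c>a>b), `4 = [2,3,1]` (b>c>a), `5 = [3,2,1]` (c>b>a). -/
noncomputable def sym3 (a b c : ℝ) : Fin 6 :=
  if a > b then (if b > c then 0 else if a > c then 1 else 3)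
  else (if a > c then 2 else if b > c then 4 else 5)

/-- A base-word is realizable in the cyclic (1,3,n)-LRM scheme if some assignment of
distinct real charges produces it in every cyclic window. -/
def Realizable (n : ℕ) [NeZero n] (α : Fin n → Fin 6) : Prop :=
  ∃ x : Fin n → ℝ, Function.Injective x ∧
    ∀ i : Fin n, α i = sym3 (x i) (x (i + 1)) (x (i + 2))

/-- Whether a symbol starts with a descent (`0`) or an ascent (`1`). -/
def firstStep : Fin 6 → ZMod 2 := ![0, 0, 1, 0, 1, 1]

/-- Whether a symbol ends with a descent (`0`) or an ascent (`1`). -/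
def secondStep : Fin 6 → ZMod 2 := ![0, 1, 0, 1, 0, 1]

/-- The ternary digit of a symbol: together with the first step it determines the symbol. -/
def digit : Fin 6 → Fin 3 := ![0, 1, 2, 2, 1, 0]

/-- The change of direction caused by a ternary digit. -/
def turn : Fin 3 → ZMod 2 := ![0, 1, 1]

/-- The symbol with a given first step and digit. -/
def symbol (s : ZMod 2) (a : Fin 3) : Fin 6 :=
  if s = 0 then ![0, 1, 3] a else ![5, 4, 2] a

theorem symbol_firstStep_digit : ∀ a, symbol (firstStep a) (digit a) = a := by decide

theorem firstStep_symbol : ∀ s a, firstStep (symbol s a) = s := by decide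

theorem digit_symbol : ∀ s a, digit (symbol s a) = a := by decide

theorem secondStep_eq : ∀ a, secondStep a = firstStep a + turn (digit a) := by decide

theorem firstStep_sym3 (a b c : ℝ) : firstStep (sym3 a b c) = if a > b then 0 else 1 := by
  unfold sym3
  split_ifs <;> rfl

theorem secondStep_sym3 (a b c : ℝ) : secondStep (sym3 a b c) = if b > c then 0 else 1 := by
  unfold sym3
  split_ifs <;> first | rfl | (exfalso; linarith)

/-- A cyclic word in which consecutive symbols agree on the comparison they share. -/
def Consistent (n : ℕ) [NeZero n] (α : Fin n → Fin 6) : Prop :=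
  ∀ i, secondStep (α i) = firstStep (α (i + 1))

theorem Fin.add_one_add_one {n : ℕ} [NeZero n] (i : Fin n) : i + 1 + 1 = i + 2 := by
  apply Fin.ext
  simp [Fin.val_add, add_assoc]

theorem Realizable.consistent {n : ℕ} [NeZero n] {α : Fin n → Fin 6} (h : Realizable n α) :
    Consistent n α := by
  obtain ⟨x, -, hx⟩ := h
  intro i
  rw [hx, hx, secondStep_sym3, firstStep_sym3, Fin.add_one_add_one]

theorem Realizable.of_rotate {n : ℕ} [NeZero n] {α : Fin n → Fin 6} (c : Fin n)
    (h : Realizable n fun i => α (i + c)) : Realizable n α := by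
  obtain ⟨x, hinj, hx⟩ := h
  refine ⟨fun i => x (i - c), fun i j hij => sub_left_injective (hinj hij), fun i => ?_⟩
  have := hx (i - c)
  simpa [sub_add_eq_add_sub] using this

/-- A new charge can be appended to two given ones so as to produce any symbol that is compatible
with their order. -/
theorem infinite_setOf_sym3_eq {a b : ℝ} (hab : a ≠ b) {s : Fin 6}
    (hs : firstStep s = if a > b then 0 else 1) : {z | sym3 a b z = s}.Infinite := by
  rcases hab.lt_or_gt with h | h
  · rw [if_neg (by simpa using h.le)] at hs
    have hs' : s = 2 ∨ s = 4 ∨ s = 5 := by revert hs; revert s; decide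
    rcases hs' with rfl | rfl | rfl
    · refine (Set.Iio_infinite a).mono fun z hz => ?_
      simp only [Set.mem_Iio] at hz
      simp [sym3, h.le.not_gt, hz]
    · refine (Set.Ioo_infinite h).mono fun z hz => ?_
      simp [sym3, h.le.not_gt, hz.1.le.not_gt, hz.2]
    · refine (Set.Ioi_infinite b).mono fun z hz => ?_
      simp only [Set.mem_Ioi] at hz
      simp [sym3, h.le.not_gt, hz.le.not_gt, (h.trans hz).le.not_gt]
  · rw [if_pos h] at hs
    have hs' : s = 0 ∨ s = 1 ∨ s = 3 := by revert hs; revert s; decide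
    rcases hs' with rfl | rfl | rfl
    · refine (Set.Iio_infinite b).mono fun z hz => ?_
      simp only [Set.mem_Iio] at hz
      simp [sym3, h, hz]
    · refine (Set.Ioo_infinite h).mono fun z hz => ?_
      simp [sym3, h, hz.1.le.not_gt, hz.2]
    · refine (Set.Ioi_infinite a).mono fun z hz => ?_
      simp only [Set.mem_Ioi] at hz
      simp [sym3, h, hz.le.not_gt, (h.trans hz).le.not_gt]

/-- Without the cyclic closure, every consistent word is realizable. -/
theorem exists_linear_realization (β : ℕ → Fin 6) (N : ℕ)
    (hβ : ∀ i < N, secondStep (β i) = firstStep (β (i + 1))) :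
    ∃ x : ℕ → ℝ, Set.InjOn x (Set.Iio (N + 2)) ∧
      (∀ i < N, β i = sym3 (x i) (x (i + 1)) (x (i + 2))) ∧
      firstStep (β N) = if x N > x (N + 1) then 0 else 1 := by
  induction N with
  | zero =>
    rcases (by decide : ∀ s : ZMod 2, s = 0 ∨ s = 1) (firstStep (β 0)) with h | h
    · refine ⟨fun i => -i, fun i _ j _ hij => by simpa using hij, by simp, by simp [h]⟩
    · refine ⟨fun i => i, fun i _ j _ hij => by simpa using hij, by simp, by simp [h]⟩
  | succ N ih =>
    obtain ⟨x, hinj, hx, hN⟩ := ih fun i hi => hβ i (by omega)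
    have hne : x N ≠ x (N + 1) := fun h => by
      have := hinj (by simp) (by simp) h
      omega
    obtain ⟨z, hz, hzx⟩ := (infinite_setOf_sym3_eq hne hN).exists_notMem_finset
      ((Finset.range (N + 2)).image x)
    have hz' : sym3 (x N) (x (N + 1)) z = β N := hz
    have hzx' : ∀ i < N + 2, x i ≠ z := by simpa using hzx
    have hold : ∀ i < N + 2, Function.update x (N + 2) z i = x i := fun i hi =>
      Function.update_of_ne (by omega) _ _
    have hnew : Function.update x (N + 2) z (N + 2) = z := Function.update_self ..
    refine ⟨Function.update x (N + 2) z, ?_, ?_, ?_⟩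
    · intro i hi j hj hij
      simp only [Set.mem_Iio] at hi hj
      rcases (by omega : i = N + 2 ∨ i < N + 2) with rfl | hi' <;>
        rcases (by omega : j = N + 2 ∨ j < N + 2) with rfl | hj'
      · rfl
      · rw [hnew, hold j hj'] at hij
        exact absurd hij.symm (hzx' j hj')
      · rw [hnew, hold i hi'] at hij
        exact absurd hij (hzx' i hi')
      · rw [hold i hi', hold j hj'] at hij
        exact hinj hi' hj' hij
    · intro i hi
      rcases (by omega : i = N ∨ i < N) with rfl | hi'
      · rw [hold _ (by omega), hold _ (by omega), hnew, hz']
      · rw [hold _ (by omega), hold _ (by omega), hold _ (by omega), hx i hi']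
    · rw [hold (N + 1) (by omega), hnew, ← hβ N (by omega), ← hz', secondStep_sym3]

/-- Two adjacent charges lying below, or above, all the others realize the digits `0, 0, 2, 0` in
four consecutive windows. -/
theorem exists_two_extreme (s : ZMod 2) {a b c d B : ℝ} (ha : |a| < B) (hb : |b| < B)
    (hc : |c| < B) (hd : |d| < B) (hab : s = if a > b then 0 else 1)
    (hcd : s + 1 = if c > d then 0 else 1) :
    ∃ u v, B ≤ |u| ∧ |u| < |v| ∧ symbol s 0 = sym3 a b u ∧ symbol s 0 = sym3 b u v ∧
      symbol s 2 = sym3 u v c ∧ symbol (s + 1) 0 = sym3 v c d := by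
  have hB : 0 < B := (abs_nonneg _).trans_lt ha
  obtain ⟨ha₁, ha₂⟩ := abs_lt.1 ha
  obtain ⟨hb₁, hb₂⟩ := abs_lt.1 hb
  obtain ⟨hc₁, hc₂⟩ := abs_lt.1 hc
  obtain ⟨hd₁, hd₂⟩ := abs_lt.1 hd
  rcases (by decide : ∀ s : ZMod 2, s = 0 ∨ s = 1) s with rfl | rfl
  · have hab' : a > b := by by_contra h; simp [h] at hab
    have hcd' : ¬ c > d := by intro h; simp [h] at hcd
    refine ⟨-B, -(B + 1), ?_, ?_, ?_, ?_, ?_, ?_⟩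
    · rw [abs_neg]; exact le_abs_self B
    · rw [abs_neg, abs_neg, abs_of_pos hB, abs_of_pos (by linarith)]; linarith
    all_goals
      unfold sym3
      split_ifs <;> first | rfl | (exfalso; linarith)
  · have hab' : ¬ a > b := by intro h; simp [h] at hab
    have hcd' : c > d := by
      by_contra h
      rw [if_neg h] at hcd
      revert hcd
      decide
    refine ⟨B, B + 1, le_abs_self B, ?_, ?_, ?_, ?_, ?_⟩
    · rw [abs_of_pos hB, abs_of_pos (by linarith)]; linarith
    all_goals
      unfold sym3
      split_ifs <;> first | rfl | (exfalso; linarith)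

/-- A consistent word is realizable if its last four symbols force its last two cells to be
the two lowest or the two highest. -/
theorem Consistent.realizable_of_last {m : ℕ} {α : Fin (m + 5) → Fin 6}
    (h : Consistent (m + 5) α) (h₁ : digit (α ⟨m + 1, by omega⟩) = 0)
    (h₂ : digit (α ⟨m + 2, by omega⟩) = 0) (h₃ : digit (α ⟨m + 3, by omega⟩) = 2)
    (h₄ : digit (α ⟨m + 4, by omega⟩) = 0) : Realizable (m + 5) α := by
  have hsucc : ∀ i (hi : i + 1 < m + 5), (⟨i, by omega⟩ + 1 : Fin (m + 5)) = ⟨i + 1, hi⟩ := by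
    intro i hi
    apply Fin.ext
    simp [Fin.val_add, Nat.mod_eq_of_lt hi]
  have hlast : (⟨m + 4, by omega⟩ + 1 : Fin (m + 5)) = ⟨0, by omega⟩ := by
    apply Fin.ext
    simp [Fin.val_add]
  have hα : ∀ i (hi : i + 1 < m + 5),
      secondStep (α ⟨i, by omega⟩) = firstStep (α ⟨i + 1, hi⟩) := by
    intro i hi
    rw [← hsucc i hi]
    exact h _
  have h₅ := h ⟨m + 4, by omega⟩
  rw [hlast] at h₅
  obtain ⟨x, hinj, hx, hsign⟩ := exists_linear_realization
    (fun j => if hj : j < m + 5 then α ⟨j, hj⟩ else 0) (m + 1) (by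
      intro i hi
      simp only [dif_pos (by omega : i < m + 5), dif_pos (by omega : i + 1 < m + 5)]
      exact hα i (by omega))
  have hx' : ∀ i (hi : i < m + 1),
      α ⟨i, by omega⟩ = sym3 (x i) (x (i + 1)) (x (i + 2)) := by
    intro i hi
    rw [← hx i hi, dif_pos (by omega : i < m + 5)]
  simp only [dif_pos (by omega : m + 1 < m + 5)] at hsign
  have h₀ := congrArg firstStep (hx' 0 (by omega))
  rw [firstStep_sym3] at h₀
  have h12 := hα (m + 1) (by omega)
  have h23 := hα (m + 2) (by omega)
  have h34 := hα (m + 3) (by omega)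
  have h₁' := symbol_firstStep_digit (α ⟨m + 1, by omega⟩)
  have h₂' := symbol_firstStep_digit (α ⟨m + 2, by omega⟩)
  have h₃' := symbol_firstStep_digit (α ⟨m + 3, by omega⟩)
  have h₄' := symbol_firstStep_digit (α ⟨m + 4, by omega⟩)
  rw [secondStep_eq] at h12 h23 h34 h₅
  rw [h₁] at h12 h₁'
  rw [h₂, ← h12] at h23
  rw [h₂, ← h12] at h₂'
  rw [h₃, ← h23] at h34
  rw [h₃, ← h23] at h₃'
  rw [h₄, ← h34] at h₅
  rw [h₄, ← h34] at h₄'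
  obtain ⟨B, hB⟩ : ∃ B, ∀ i < m + 3, |x i| < B := by
    refine ⟨∑ i ∈ Finset.range (m + 3), |x i| + 1, fun i hi => ?_⟩
    have := Finset.single_le_sum (f := fun i => |x i|) (fun i _ => abs_nonneg _)
      (Finset.mem_range.2 hi)
    linarith
  have hcycle : firstStep (α ⟨m + 1, by omega⟩) + 1 = if x 0 > x 1 then 0 else 1 := by
    rw [← h₀, ← h₅]
    generalize firstStep _ = s
    revert s
    decide
  obtain ⟨u, v, hu, huv, w₁, w₂, w₃, w₄⟩ := exists_two_extreme _ (hB (m + 1) (by omega))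
    (hB (m + 2) (by omega)) (hB 0 (by omega)) (hB 1 (by omega)) hsign hcycle
  have ht₀ : ∀ s, s + turn 0 = s := by decide
  have ht₂ : ∀ s, s + turn 2 = s + 1 := by decide
  simp only [ht₀, ht₂] at h₂' h₃' h₄'
  rw [h₁'] at w₁
  rw [h₂'] at w₂
  rw [h₃'] at w₃
  rw [h₄'] at w₄
  let y : ℕ → ℝ := fun i => if i < m + 3 then x i else if i = m + 3 then u else v
  have hy : ∀ i < m + 3, y i = x i := fun i hi => if_pos hi
  have hyu : y (m + 3) = u := by simp [y]
  have hyv : y (m + 4) = v := by simp [y]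
  have hxu : ∀ i < m + 3, x i ≠ u := fun i hi h => by
    have := hB i hi
    rw [h] at this
    linarith
  have hxv : ∀ i < m + 3, x i ≠ v := fun i hi h => by
    have := hB i hi
    rw [h] at this
    linarith
  have huv' : u ≠ v := fun h => huv.ne (congrArg _ h)
  refine ⟨fun i => y i, ?_, ?_⟩
  · rintro ⟨i, hi⟩ ⟨j, hj⟩ hij
    simp only at hij
    rw [Fin.mk.injEq]
    rcases (by omega : i < m + 3 ∨ i = m + 3 ∨ i = m + 4) with hi' | rfl | rfl <;>
      rcases (by omega : j < m + 3 ∨ j = m + 3 ∨ j = m + 4) with hj' | rfl | rfl <;>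
      simp_all
    exact hinj hi' hj' hij
  · rintro ⟨i, hi⟩
    rw [← Fin.add_one_add_one]
    rcases (by omega : i < m + 1 ∨ i = m + 1 ∨ i = m + 2 ∨ i = m + 3 ∨ i = m + 4) with
      hi' | rfl | rfl | rfl | rfl
    · rw [hsucc i (by omega), hsucc (i + 1) (by omega), hx' i hi']
      change _ = sym3 (y i) (y (i + 1)) (y (i + 2))
      rw [hy _ (by omega), hy _ (by omega), hy _ (by omega)]
    · rw [hsucc _ (by omega), hsucc _ (by omega), w₁]
      change _ = sym3 (y (m + 1)) (y (m + 2)) (y (m + 3))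
      rw [hy _ (by omega), hy _ (by omega), hyu]
    · rw [hsucc _ (by omega), hsucc _ (by omega), w₂]
      change _ = sym3 (y (m + 2)) (y (m + 3)) (y (m + 4))
      rw [hy _ (by omega), hyu, hyv]
    · rw [hsucc _ (by omega), hlast, w₃]
      change _ = sym3 (y (m + 3)) (y (m + 4)) (y 0)
      rw [hyu, hyv, hy _ (by omega)]
    · rw [hlast, hsucc _ (by omega), w₄]
      change _ = sym3 (y (m + 4)) (y 0) (y 1)
      rw [hyv, hy _ (by omega), hy _ (by omega)]

/-- The state after `k` digits, starting from `t`. -/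
def state {n : ℕ} (t : ZMod 2) (w : Fin n → Fin 3) (k : ℕ) : ZMod 2 :=
  t + ∑ j ∈ Finset.range k, if h : j < n then turn (w ⟨j, h⟩) else 0

/-- The word with first step `t` and digits `w`. -/
def decode {n : ℕ} (t : ZMod 2) (w : Fin n → Fin 3) (i : Fin n) : Fin 6 :=
  symbol (state t w i) (w i)

theorem state_succ {n : ℕ} (t : ZMod 2) (w : Fin n → Fin 3) (i : Fin n) :
    state t w (i + 1) = state t w i + turn (w i) := by
  simp [state, Finset.sum_range_succ, add_assoc]

theorem state_length {n : ℕ} (t : ZMod 2) (w : Fin n → Fin 3) :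
    state t w n = t + ∑ i, turn (w i) := by
  rw [state, Finset.sum_range]
  simp

theorem consistent_decode {n : ℕ} (t : ZMod 2) {w : Fin (n + 1) → Fin 3}
    (hw : ∑ i, turn (w i) = 0) : Consistent (n + 1) (decode t w) := by
  intro i
  rw [secondStep_eq, decode, decode, firstStep_symbol, firstStep_symbol, digit_symbol,
    ← state_succ]
  rcases Fin.eq_castSucc_or_eq_last i with ⟨j, rfl⟩ | rfl
  · simp
  · rw [Fin.val_last, state_length, hw, Fin.last_add_one]
    simp [state]

theorem Consistent.sum_turn {n : ℕ} [NeZero n] {α : Fin n → Fin 6} (h : Consistent n α) :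
    ∑ i, turn (digit (α i)) = 0 := by
  have h' : ∀ i, turn (digit (α i)) = firstStep (α (i + 1)) - firstStep (α i) := fun i => by
    rw [← h i, secondStep_eq, add_sub_cancel_left]
  simp_rw [h', Finset.sum_sub_distrib, sub_eq_zero]
  exact Equiv.sum_comp (Equiv.addRight 1) fun i => firstStep (α i)

theorem Consistent.decode_digit {n : ℕ} {α : Fin (n + 1) → Fin 6} (h : Consistent (n + 1) α) :
    decode (firstStep (α 0)) (fun i => digit (α i)) = α := by
  have key : ∀ i, state (firstStep (α 0)) (fun i => digit (α i)) (i : Fin (n + 1)) =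
      firstStep (α i) := by
    intro i
    induction i using Fin.induction with
    | zero => simp [state]
    | succ i ih =>
      have := state_succ (firstStep (α 0)) (fun i => digit (α i)) i.castSucc
      rw [ih, ← secondStep_eq, h] at this
      simpa using this
  funext i
  rw [decode, key, symbol_firstStep_digit]

/-- The digits `0, 0, 2, 0` do not occur in consecutive positions. -/
def Avoids {n : ℕ} (w : Fin n → Fin 3) : Prop :=
  ∀ p (h : p + 3 < n), ¬ (w ⟨p, by omega⟩ = 0 ∧ w ⟨p + 1, by omega⟩ = 0 ∧
    w ⟨p + 2, by omega⟩ = 2 ∧ w ⟨p + 3, h⟩ = 0)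

theorem Consistent.realizable_of_not_avoids {n : ℕ} {α : Fin (n + 5) → Fin 6}
    (h : Consistent (n + 5) α) (hα : ¬ Avoids fun i => digit (α i)) :
    Realizable (n + 5) α := by
  simp only [Avoids, not_forall, not_not] at hα
  obtain ⟨p, hp, h₁, h₂, h₃, h₄⟩ := hα
  have key : ∀ k (hk : k < 4), (⟨n + 1 + k, by omega⟩ : Fin (n + 5)) + Fin.ofNat (n + 5) (p + 4) =
      ⟨p + k, by omega⟩ := by
    intro k hk
    apply Fin.ext
    rw [Fin.val_add, Fin.val_ofNat, Nat.add_mod_mod,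
      show n + 1 + k + (p + 4) = p + k + (n + 5) by ring, Nat.add_mod_right,
      Nat.mod_eq_of_lt (by omega)]
  refine .of_rotate (Fin.ofNat (n + 5) (p + 4)) (Consistent.realizable_of_last ?_ ?_ ?_ ?_ ?_)
  · intro i
    rw [h, add_right_comm]
  · rwa [key 0 (by omega)]
  · rwa [key 1 (by omega)]
  · rwa [key 2 (by omega)]
  · rwa [key 3 (by omega)]

theorem two_mul_card_sum_turn_eq_zero (n : ℕ) :
    2 * (Nat.card {w : Fin n → Fin 3 // ∑ i, turn (w i) = 0} : ℤ) = 3 ^ n + (-1) ^ n := by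
  let e : ZMod 2 → ℤ := fun s => if s = 0 then 1 else -1
  have he : ∀ a b, e (a + b) = e a * e b := by decide
  have hesum : ∀ w : Fin n → Fin 3, e (∑ i, turn (w i)) = ∏ i, e (turn (w i)) := fun w => by
    induction (Finset.univ : Finset (Fin n)) using Finset.induction_on with
    | empty => rfl
    | insert i s hi ih => rw [Finset.sum_insert hi, Finset.prod_insert hi, he, ih]
  have h₁ : ∑ w : Fin n → Fin 3, e (∑ i, turn (w i)) = (-1) ^ n := by
    simp_rw [hesum]
    rw [← Fintype.prod_sum (fun (_ : Fin n) a => e (turn a)), Finset.prod_const, Finset.card_univ,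
      Fintype.card_fin, show ∑ a, e (turn a) = -1 by decide]
  have h₂ : ∑ w : Fin n → Fin 3, (1 + e (∑ i, turn (w i))) = 3 ^ n + (-1) ^ n := by
    rw [Finset.sum_add_distrib, h₁]
    simp
  have he' : ∀ s, 1 + e s = if s = 0 then 2 else 0 := by decide
  simp_rw [he'] at h₂
  rw [← h₂, ← Finset.sum_filter, Finset.sum_const, Nat.card_eq_fintype_card,
    Fintype.card_subtype, nsmul_eq_mul, mul_comm]

theorem two_mul_card (X : Type*) : 2 * Nat.card X = Nat.card (ZMod 2 × X) := by
  rw [Nat.card_prod, Nat.card_zmod]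

theorem card_realizable_le (n : ℕ) :
    Nat.card {α // Realizable (n + 1) α} ≤
      2 * Nat.card {w : Fin (n + 1) → Fin 3 // ∑ i, turn (w i) = 0} := by
  rw [two_mul_card]
  refine Nat.card_le_card_of_injective
    (fun α => (firstStep (α.1 0), ⟨fun i => digit (α.1 i), α.2.consistent.sum_turn⟩)) ?_
  intro α β h
  simp only [Prod.mk.injEq, Subtype.mk.injEq] at h
  rw [Subtype.ext_iff, ← α.2.consistent.decode_digit, h.1, h.2, β.2.consistent.decode_digit]

theorem decode_injective {n : ℕ} {t t' : ZMod 2} {w w' : Fin (n + 1) → Fin 3}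
    (h : decode t w = decode t' w') : t = t' ∧ w = w' := by
  constructor
  · simpa [decode, firstStep_symbol, state] using congrArg firstStep (congrFun h 0)
  · funext i
    simpa [decode, digit_symbol] using congrArg digit (congrFun h i)

theorem le_card_realizable (n : ℕ) :
    2 * Nat.card {w : Fin (n + 5) → Fin 3 // ∑ i, turn (w i) = 0} ≤
      Nat.card {α // Realizable (n + 5) α} + 2 * Nat.card {w : Fin (n + 5) → Fin 3 // Avoids w} := by
  rw [two_mul_card, two_mul_card, ← Nat.card_sum]
  classical
  refine Nat.card_le_card_of_injective (fun tw =>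
    if h : Avoids tw.2.1 then .inr (tw.1, ⟨tw.2.1, h⟩)
    else .inl ⟨decode tw.1 tw.2.1, (consistent_decode tw.1 tw.2.2).realizable_of_not_avoids
      (by simpa only [decode, digit_symbol] using h)⟩) ?_
  rintro ⟨t, w, hw⟩ ⟨t', w', hw'⟩ h
  simp only at h
  split_ifs at h
  · simpa using h
  · simpa using decode_injective (by simpa using h)

theorem card_avoids_add_four (n : ℕ) :
    Nat.card {w : Fin (n + 4) → Fin 3 // Avoids w} ≤
      80 * Nat.card {w : Fin n → Fin 3 // Avoids w} := by
  have h80 : Nat.card {v : Fin 4 → Fin 3 // v ≠ ![0, 0, 2, 0]} = 80 := by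
    rw [Nat.card_eq_fintype_card, Fintype.card_subtype_compl]
    simp
  rw [← h80, mul_comm, ← Nat.card_prod]
  refine Nat.card_le_card_of_injective (fun w => (⟨fun i => w.1 (Fin.castAdd 4 i), ?_⟩,
    ⟨fun i => w.1 (Fin.natAdd n i), ?_⟩)) ?_
  · intro p hp
    exact w.2 p (by omega)
  · intro h
    exact w.2 n (by omega) ⟨congrFun h 0, congrFun h 1, congrFun h 2, congrFun h 3⟩
  · intro w w' h
    simp only [Prod.mk.injEq] at h
    refine Subtype.ext (funext fun i => ?_)
    induction i using Fin.addCases with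
    | left i => exact congrFun (congrArg Subtype.val h.1) i
    | right i => exact congrFun (congrArg Subtype.val h.2) i

theorem card_avoids_div_le (n : ℕ) :
    (Nat.card {w : Fin n → Fin 3 // Avoids w} : ℝ) / 3 ^ n ≤ (80 / 81) ^ (n / 4) := by
  induction n using Nat.strong_induction_on with
  | _ n ih =>
    rcases lt_or_ge n 4 with hn | hn
    · rw [Nat.div_eq_of_lt hn, pow_zero, div_le_one (by positivity)]
      have := Nat.card_le_card_of_injective
        (Subtype.val : {w : Fin n → Fin 3 // Avoids w} → Fin n → Fin 3) Subtype.val_injective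
      simp only [Nat.card_eq_fintype_card (α := Fin n → Fin 3), Fintype.card_fun,
        Fintype.card_fin] at this
      exact_mod_cast this
    · obtain ⟨k, rfl⟩ := Nat.exists_eq_add_of_le' hn
      have h := ih k (by omega)
      have hc : (Nat.card {w : Fin (k + 4) → Fin 3 // Avoids w} : ℝ) ≤
          80 * Nat.card {w : Fin k → Fin 3 // Avoids w} := by
        exact_mod_cast card_avoids_add_four k
      rw [Nat.add_div_right k (by norm_num), pow_succ (80 / 81 : ℝ)]
      calc _ ≤ 80 * (Nat.card {w : Fin k → Fin 3 // Avoids w} : ℝ) / 3 ^ (k + 4) := by gcongr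
        _ = (Nat.card {w : Fin k → Fin 3 // Avoids w} : ℝ) / 3 ^ k * (80 / 81) := by
          rw [pow_add]; field_simp; norm_num
        _ ≤ _ := by gcongr

theorem tendsto_card_avoids_div :
    Filter.Tendsto (fun n => (Nat.card {w : Fin n → Fin 3 // Avoids w} : ℝ) / 3 ^ n)
      Filter.atTop (nhds 0) :=
  squeeze_zero (fun n => by positivity) card_avoids_div_le
    ((tendsto_pow_atTop_nhds_zero_of_lt_one (by norm_num) (by norm_num)).comp
      (Nat.tendsto_div_const_atTop (by norm_num)))

theorem abs_card_realizable_div_sub_one_le (n : ℕ) :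
    |(Nat.card {α // Realizable (n + 5) α} : ℝ) / 3 ^ (n + 5) - 1| ≤
      (1 / 3) ^ (n + 5) +
        2 * ((Nat.card {w : Fin (n + 5) → Fin 3 // Avoids w} : ℝ) / 3 ^ (n + 5)) := by
  have h₁ : (Nat.card {α // Realizable (n + 5) α} : ℝ) ≤
      2 * Nat.card {w : Fin (n + 5) → Fin 3 // ∑ i, turn (w i) = 0} := by
    exact_mod_cast card_realizable_le (n + 4)
  have h₂ : 2 * (Nat.card {w : Fin (n + 5) → Fin 3 // ∑ i, turn (w i) = 0} : ℝ) ≤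
      Nat.card {α // Realizable (n + 5) α} +
        2 * Nat.card {w : Fin (n + 5) → Fin 3 // Avoids w} := by
    exact_mod_cast le_card_realizable n
  have h₃ : 2 * (Nat.card {w : Fin (n + 5) → Fin 3 // ∑ i, turn (w i) = 0} : ℝ) =
      3 ^ (n + 5) + (-1) ^ (n + 5) := by
    exact_mod_cast two_mul_card_sum_turn_eq_zero (n + 5)
  rw [h₃] at h₁ h₂
  have h₄ := abs_le.1 (abs_neg_one_pow (α := ℝ) (n + 5)).le
  have h₅ : (0 : ℝ) ≤ Nat.card {w : Fin (n + 5) → Fin 3 // Avoids w} := by positivity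
  have h3 : (0 : ℝ) < 3 ^ (n + 5) := by positivity
  rw [div_sub_one h3.ne', abs_div, abs_of_pos h3, one_div, inv_pow, inv_eq_one_div,
    ← mul_div_assoc, ← add_div]
  gcongr
  rw [abs_le]
  constructor <;> linarith

theorem stmt_13 :
    Filter.Tendsto
      (fun n : ℕ => (Nat.card {α : Fin (n + 1) → Fin 6 // Realizable (n + 1) α} : ℝ) /
        3 ^ (n + 1))
      Filter.atTop (nhds 1) := by
  rw [← Filter.tendsto_add_atTop_iff_nat 4, tendsto_iff_norm_sub_tendsto_zero]
  refine squeeze_zero (fun n => norm_nonneg _) abs_card_realizable_div_sub_one_le ?_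
  have h₁ : Filter.Tendsto (fun n : ℕ => (1 / 3 : ℝ) ^ n) Filter.atTop (nhds 0) :=
    tendsto_pow_atTop_nhds_zero_of_lt_one (by norm_num) (by norm_num)
  have h := h₁.add (tendsto_card_avoids_div.const_mul 2)
  rw [mul_zero, add_zero] at h
  exact h.comp (Filter.tendsto_add_atTop_nat 5)
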